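/- arXiv:1406.1026 — 2 statements merged into one kernel-verified Lean document; each statement's English description precedes it below -/
import Mathlib

section
/- Let X be an infinite-dimensional reflexive real Banach space with topological dual X*, and let T : X → X* be a continuous potential operator. Assume that T is closed, that T is not monotone, that the functional J_T is sequentially weakly lower semicontinuous, and that J_T + φ is coercive for every φ ∈ X*. Suppose moreover that there exists a closed σ-compact set B ⊂ X such that the restriction of T to X \ B is of class C¹, and let S̃ be the set of all points x ∈ X \ B at which T'(x) is not invertible. Then the image T(S̃) is not σ-compact. -/
open Filter Topology Set NormedSpace

/-!
In an infinite-dimensional Banach space a σ-compact set has path-connected dense complement. A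
closed map has fibres with compact frontier (Vaĭnšteĭn), so a nonconstant closed continuous map
on such a space is proper: the complement of the frontier of a fibre is connected, which leaves
the fibre no interior.

Suppose `T` is a local homeomorphism off a closed set whose image `A` is σ-compact. Fix a value
`y ∉ A` of `T` and remove from the target the shadow of `A` seen from `y`. What remains is open
and star-shaped around `y`, hence simply connected, and its preimage is the complement of a
σ-compact set, hence connected. So `T` is a covering with one sheet there, and `y` has exactly one
preimage `x`. By the direct method `J - y` has a global minimiser, which is also a preimage of
`y`, so it is `x`. Such points `x` are dense, so by continuity every `x` minimises `J - T x`, and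
adding `J x - T x x ≤ J z - T x z` to its mirror image shows that `T` is monotone.
-/

section WeakCompactness

theorem isSeqCompact_of_seq_separating {Z M : Type*} [TopologicalSpace Z] [MetricSpace M]
    {K : Set Z} (hK : IsCompact K) (f : ℕ → Z → M) (hf : ∀ n, Continuous (f n))
    (hsep : ∀ a ∈ K, ∀ b ∈ K, (∀ n, f n a = f n b) → a = b) : IsSeqCompact K := by
  have : CompactSpace K := isCompact_iff_compactSpace.mp hK
  have : TopologicalSpace.MetrizableSpace K :=
    Metric.PiNatEmbed.TopologicalSpace.MetrizableSpace.of_countable_separating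
      (fun n (k : K) => f n k) (fun n => (hf n).comp continuous_subtype_val) fun a b hab => by
        contrapose! hab
        exact Subtype.ext (hsep a a.2 b b.2 hab)
  simpa using IsSeqCompact.range (continuous_subtype_val (p := (· ∈ K))).seqContinuous

theorem exists_seq_strongDual_separating (𝕜 : Type*) {E : Type*} [RCLike 𝕜]
    [NormedAddCommGroup E] [NormedSpace 𝕜 E] {s : Set E} (hs : TopologicalSpace.IsSeparable s) :
    ∃ f : ℕ → StrongDual 𝕜 E, ∀ y ∈ s, (∀ n, f n y = 0) → y = 0 := by
  obtain ⟨c, hc, hsc⟩ := hs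
  rcases c.eq_empty_or_nonempty with rfl | hne
  · exact ⟨0, fun y hy => by simpa using hsc hy⟩
  obtain ⟨d, rfl⟩ := hc.exists_eq_range hne
  choose f hf_norm hf_apply using fun n => exists_dual_vector'' 𝕜 (d n)
  refine ⟨f, fun y hy hfy => norm_le_zero_iff.1 (le_of_forall_pos_le_add fun ε hε => ?_)⟩
  obtain ⟨_, ⟨n, rfl⟩, hn⟩ := Metric.mem_closure_iff.1 (hsc hy) (ε / 2) (half_pos hε)
  have hd : ‖d n‖ ≤ ‖d n - y‖ :=
    calc ‖d n‖ = ‖f n (d n - y)‖ := by simp [hf_apply, hfy]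
      _ ≤ 1 * ‖d n - y‖ := (f n).le_of_opNorm_le (hf_norm n) _
      _ = ‖d n - y‖ := one_mul _
  rw [dist_comm, dist_eq_norm] at hn
  linarith [norm_le_norm_add_norm_sub (d n) y]

variable {E : Type*} [NormedAddCommGroup E] [NormedSpace ℝ E]

theorem isCompact_toWeakSpace_image (hrefl : Function.Surjective (inclusionInDoubleDual ℝ E))
    {s : Set E} (hconv : Convex ℝ s) (hs : IsClosed s) (hb : Bornology.IsBounded s) :
    IsCompact (toWeakSpace ℝ E '' s) := by
  have hsurj : Function.Surjective (inclusionInDoubleDualWeak ℝ E) :=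
    StrongDual.toWeakDual.surjective.comp hrefl
  have hcompact := isCompact_closure_of_isBounded ℝ E (toWeakSpace ℝ E '' s)
    (by rwa [preimage_image_eq _ (toWeakSpace ℝ E).injective])
    (by rw [hsurj.range_eq]; exact subset_univ _)
  rwa [← hconv.toWeakSpace_closure ℝ, hs.closure_eq] at hcompact

/-- Weak convergence of the sequence `u` to `x`, tested on continuous linear functionals so that the
type synonym `WeakSpace` does not occur in statements. -/
def TendstoWeakly (u : ℕ → E) (x : E) : Prop :=
  ∀ φ : StrongDual ℝ E, Tendsto (fun n => φ (u n)) atTop (𝓝 (φ x))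

theorem exists_subseq_tendstoWeakly (hrefl : Function.Surjective (inclusionInDoubleDual ℝ E))
    {u : ℕ → E} (hu : Bornology.IsBounded (range u)) :
    ∃ (x : E) (σ : ℕ → ℕ), StrictMono σ ∧ TendstoWeakly (u ∘ σ) x := by
  obtain ⟨R, hR⟩ := hu.subset_closedBall 0
  let Y : Submodule ℝ E := (Submodule.span ℝ (range u)).topologicalClosure
  have huY : range u ⊆ Y := Submodule.subset_span.trans (Submodule.le_topologicalClosure _)
  have hY : TopologicalSpace.IsSeparable (Y : Set E) := by
    rw [Submodule.topologicalClosure_coe]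
    exact ((countable_range u).isSeparable.span (R := ℝ)).closure
  obtain ⟨f, hf⟩ := exists_seq_strongDual_separating ℝ hY
  have heval (φ : StrongDual ℝ E) : Continuous fun w => φ ((toWeakSpace ℝ E).symm w) :=
    WeakBilin.eval_continuous (topDualPairing ℝ E).flip φ
  have hcompact : IsCompact (toWeakSpace ℝ E '' (Metric.closedBall 0 R ∩ Y)) :=
    isCompact_toWeakSpace_image hrefl ((convex_closedBall 0 R).inter Y.convex)
      (Metric.isClosed_closedBall.inter (Submodule.isClosed_topologicalClosure _))
      (Metric.isBounded_closedBall.subset inter_subset_left)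
  have hseq : IsSeqCompact (toWeakSpace ℝ E '' (Metric.closedBall 0 R ∩ Y)) := by
    refine isSeqCompact_of_seq_separating hcompact _ (fun n => heval (f n)) ?_
    rintro _ ⟨a, ha, rfl⟩ _ ⟨b, hb, rfl⟩ hab
    have hfab (n : ℕ) : f n (a - b) = 0 := by simpa [sub_eq_zero] using hab n
    rw [sub_eq_zero.1 (hf _ (Y.sub_mem ha.2 hb.2) hfab)]
  obtain ⟨_, ⟨x, -, rfl⟩, σ, hσ, hlim⟩ := hseq (x := fun n => toWeakSpace ℝ E (u n)) fun n =>
    mem_image_of_mem _ ⟨hR (mem_range_self n), huY (mem_range_self n)⟩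
  exact ⟨x, σ, hσ, fun φ => ((heval φ).tendsto _).comp hlim⟩

end WeakCompactness

section DirectMethod

variable {E : Type*} [NormedAddCommGroup E] [NormedSpace ℝ E] {J : E → ℝ}

/-- Sequential weak lower semicontinuity: `J x ≤ liminf J (u n)` whenever `u` converges weakly to
`x`. The inequality is expressed through the numbers `b < J x`, because a real-valued `liminf` is
junk for unbounded sequences. -/
def WeaklySeqLowerSemicontinuous (J : E → ℝ) : Prop :=
  ∀ (u : ℕ → E) (x : E), TendstoWeakly u x → ∀ b < J x, ∀ᶠ n in atTop, b < J (u n)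

theorem WeaklySeqLowerSemicontinuous.add_strongDual (hJ : WeaklySeqLowerSemicontinuous J)
    (φ : StrongDual ℝ E) : WeaklySeqLowerSemicontinuous fun x => J x + φ x := by
  intro u x hu b hb
  obtain ⟨c, hbc, hcJ⟩ := exists_between (sub_lt_iff_lt_add.2 hb)
  have hφ : ∀ᶠ n in atTop, b - c < φ (u n) :=
    (hu φ).eventually_const_lt (by linarith)
  filter_upwards [hJ u x hu c hcJ, hφ] with n hJn hφn
  linarith

theorem WeaklySeqLowerSemicontinuous.exists_forall_le
    (hrefl : Function.Surjective (inclusionInDoubleDual ℝ E))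
    (hJ : WeaklySeqLowerSemicontinuous J) (hcoer : Tendsto J (Bornology.cobounded E) atTop) :
    ∃ x, ∀ z, J x ≤ J z := by
  -- Minimising in `EReal` avoids proving first that `J` is bounded below.
  obtain ⟨v, hv_anti, hv_lim, hv_mem⟩ := exists_seq_tendsto_sInf
    (range_nonempty fun z => (J z : EReal)) (OrderBot.bddBelow _)
  choose u hu using hv_mem
  have hu_le (n : ℕ) : J (u n) ≤ J (u 0) := by
    rw [← EReal.coe_le_coe_iff]
    simpa only [hu] using hv_anti (Nat.zero_le n)
  have hbounded : Bornology.IsBounded (range u) := by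
    have hsublevel : Bornology.IsBounded {z | J z ≤ J (u 0)} := by
      rw [Bornology.isBounded_def]
      filter_upwards [hcoer.eventually_gt_atTop (J (u 0))] with z hz using not_le.2 hz
    exact hsublevel.subset (range_subset_iff.2 hu_le)
  obtain ⟨x, σ, hσ, hx⟩ := exists_subseq_tendstoWeakly hrefl hbounded
  refine ⟨x, fun z => le_of_forall_lt_imp_le_of_dense fun b hb => ?_⟩
  have hb_le : (b : EReal) ≤ sInf (range fun z => (J z : EReal)) :=
    ge_of_tendsto (hv_lim.comp hσ.tendsto_atTop) <| by
      filter_upwards [hJ _ x hx b hb] with n hn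
      rw [Function.comp_apply, ← hu]
      exact EReal.coe_le_coe hn.le
  exact EReal.coe_le_coe_iff.1 (hb_le.trans (sInf_le (mem_range_self z)))

end DirectMethod

section LineCone

variable {E : Type*} [AddCommGroup E] [Module ℝ E] {s : Set E} {x z : E}

/-- The union of the lines through `x` and the points of `s`. It is σ-compact when `s` is, and for
`x ∉ s` a point off it is joined to `x` by a segment that avoids `s`. -/
def lineCone (x : E) (s : Set E) : Set E :=
  (fun q : E × ℝ => AffineMap.lineMap x q.1 q.2) '' (s ×ˢ univ)

theorem mem_lineCone_of_lineMap_mem (hx : x ∉ s) {t : ℝ} (ht : AffineMap.lineMap x z t ∈ s) :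
    z ∈ lineCone x s := by
  have ht0 : t ≠ 0 := by
    rintro rfl
    exact hx (by simpa using ht)
  exact ⟨(_, t⁻¹), ⟨ht, mem_univ _⟩, by simp [ht0]⟩

theorem segment_subset_compl_of_notMem_lineCone (hx : x ∉ s) (hz : z ∉ lineCone x s) :
    segment ℝ x z ⊆ sᶜ := by
  rw [segment_eq_image_lineMap]
  rintro _ ⟨t, -, rfl⟩ ht
  exact hz (mem_lineCone_of_lineMap_mem hx ht)

/-- The set of points that `s` hides from an observer at `x`. Its complement is the largest subset
of `sᶜ` that is star-shaped around `x`. -/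
def shadow (x : E) (s : Set E) : Set E :=
  {z | (segment ℝ x z ∩ s).Nonempty}

theorem subset_shadow (x : E) (s : Set E) : s ⊆ shadow x s :=
  fun z hz => ⟨z, right_mem_segment ℝ x z, hz⟩

theorem notMem_shadow_self (hx : x ∉ s) : x ∉ shadow x s := by
  simpa [shadow] using hx

theorem starConvex_compl_shadow (x : E) (s : Set E) : StarConvex ℝ x (shadow x s)ᶜ := by
  rw [starConvex_iff_segment_subset]
  rintro y hy z hz ⟨w, hw, hws⟩
  exact hy ⟨w, (convex_segment x y).segment_subset (left_mem_segment ℝ x y) hz hw, hws⟩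

theorem shadow_subset_lineCone (hx : x ∉ s) : shadow x s ⊆ lineCone x s := by
  rintro z ⟨w, hw, hws⟩
  by_contra hz
  exact segment_subset_compl_of_notMem_lineCone hx hz hw hws

end LineCone

section SigmaCompact

theorem isSigmaCompact_union {Z : Type*} [TopologicalSpace Z] {s t : Set Z}
    (hs : IsSigmaCompact s) (ht : IsSigmaCompact t) : IsSigmaCompact (s ∪ t) := by
  rw [union_eq_iUnion]
  exact isSigmaCompact_iUnion _ (Bool.forall_bool.2 ⟨ht, hs⟩)

theorem isSigmaCompact_prod {Z W : Type*} [TopologicalSpace Z] [TopologicalSpace W]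
    {s : Set Z} {t : Set W} (hs : IsSigmaCompact s) (ht : IsSigmaCompact t) :
    IsSigmaCompact (s ×ˢ t) := by
  obtain ⟨K, hK, rfl⟩ := hs
  obtain ⟨L, hL, rfl⟩ := ht
  rw [← iUnion_prod]
  exact isSigmaCompact_iUnion_of_isCompact _ fun n => (hK n.1).prod (hL n.2)

theorem isSigmaCompact_preimage_of_isProperMap {Z W : Type*} [TopologicalSpace Z]
    [TopologicalSpace W] {f : Z → W} (hf : IsProperMap f) {s : Set W} (hs : IsSigmaCompact s) :
    IsSigmaCompact (f ⁻¹' s) := by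
  obtain ⟨K, hK, rfl⟩ := hs
  rw [preimage_iUnion]
  exact isSigmaCompact_iUnion_of_isCompact _ fun n => hf.isCompact_preimage (hK n)

variable {E : Type*} [AddCommGroup E] [Module ℝ E] [TopologicalSpace E]
  [IsTopologicalAddGroup E] [ContinuousSMul ℝ E] {s : Set E} {x : E}

theorem dense_compl_of_isSigmaCompact [T2Space E] [BaireSpace E]
    (hE : ¬ FiniteDimensional ℝ E) (hs : IsSigmaCompact s) : Dense sᶜ := by
  obtain ⟨K, hK, rfl⟩ := hs
  rw [compl_iUnion]
  refine dense_iInter_of_isOpen (fun n => (hK n).isClosed.isOpen_compl) fun n => ?_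
  rw [← interior_eq_empty_iff_dense_compl, eq_empty_iff_forall_notMem]
  intro x hx
  have : LocallyCompactSpace E :=
    (hK n).locallyCompactSpace_of_mem_nhds_of_addGroup (mem_interior_iff_mem_nhds.1 hx)
  exact hE (FiniteDimensional.of_locallyCompactSpace ℝ)

theorem isSigmaCompact_lineCone (x : E) (hs : IsSigmaCompact s) :
    IsSigmaCompact (lineCone x s) :=
  (isSigmaCompact_prod hs isSigmaCompact_univ).image (by fun_prop)

theorem isPathConnected_compl_of_isSigmaCompact [T2Space E] [BaireSpace E]
    (hE : ¬ FiniteDimensional ℝ E) (hs : IsSigmaCompact s) : IsPathConnected sᶜ := by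
  refine isPathConnected_iff.2 ⟨(dense_compl_of_isSigmaCompact hE hs).nonempty, ?_⟩
  intro x hx y hy
  obtain ⟨z, hz⟩ := (dense_compl_of_isSigmaCompact hE <| isSigmaCompact_union
    (isSigmaCompact_lineCone x hs) (isSigmaCompact_lineCone y hs)).nonempty
  obtain ⟨hzx, hzy⟩ := not_or.1 hz
  exact (JoinedIn.of_segment_subset (segment_subset_compl_of_notMem_lineCone hx hzx)).trans
    (JoinedIn.of_segment_subset (segment_subset_compl_of_notMem_lineCone hy hzy)).symm

theorem interior_eq_empty_of_isSigmaCompact_frontier [T2Space E] [BaireSpace E]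
    (hE : ¬ FiniteDimensional ℝ E) (hs : IsSigmaCompact (frontier s)) (hdense : ¬ Dense s) :
    interior s = ∅ := by
  by_contra! hne
  obtain ⟨a, ha⟩ := hne
  have hsub : (frontier s)ᶜ ⊆ interior s :=
    (isPathConnected_compl_of_isSigmaCompact hE hs).isConnected.isPreconnected
      |>.subset_of_closure_inter_subset isOpen_interior
      ⟨a, fun h => h.2 ha, ha⟩ (by
        rintro b ⟨hb, hbs⟩
        by_contra hbi
        exact hbs ⟨closure_mono interior_subset hb, hbi⟩)
  refine hdense fun b => ?_
  by_cases hb : b ∈ frontier s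
  · exact hb.1
  · exact subset_closure (interior_subset (hsub hb))

theorem isClosed_shadow (x : E) (hs : IsClosed s) : IsClosed (shadow x s) := by
  have hclosed : IsClosed {q : unitInterval × E | AffineMap.lineMap x q.2 (q.1 : ℝ) ∈ s} :=
    hs.preimage (f := fun q : unitInterval × E => AffineMap.lineMap x q.2 (q.1 : ℝ))
      (by fun_prop)
  convert isClosedMap_snd_of_compactSpace _ hclosed using 1
  ext z
  simp [shadow, segment_eq_image_lineMap, Set.Nonempty]

theorem isSigmaCompact_shadow (hs : IsClosed s) (hσ : IsSigmaCompact s) (hx : x ∉ s) :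
    IsSigmaCompact (shadow x s) :=
  (isSigmaCompact_lineCone x hσ).of_isClosed_subset (isClosed_shadow x hs)
    (shadow_subset_lineCone hx)

end SigmaCompact

section ClosedMap

theorem exists_subseq_tendsto_of_isClosedMap {X Z : Type*} [TopologicalSpace X] [T1Space X]
    [FirstCountableTopology X] [TopologicalSpace Z] {f : X → Z} (hf : IsClosedMap f) {u : ℕ → X}
    {c : Z} (hne : ∀ n, f (u n) ≠ c) (hlim : Tendsto (f ∘ u) atTop (𝓝 c)) :
    ∃ (x : X) (σ : ℕ → ℕ), StrictMono σ ∧ Tendsto (u ∘ σ) atTop (𝓝 x) := by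
  obtain ⟨x, hx, hxc⟩ : c ∈ f '' closure (range u) :=
    (hf _ isClosed_closure).mem_of_tendsto hlim <| Eventually.of_forall fun n =>
      mem_image_of_mem f (subset_closure (mem_range_self n))
  have hcluster : MapClusterPt x atTop u := by
    rw [mapClusterPt_atTop_iff_forall_mem_closure]
    intro N
    rw [← image_univ, ← Iio_union_Ici (a := N), image_union, closure_union,
      ((finite_Iio N).image u).isClosed.closure_eq] at hx
    refine hx.resolve_left ?_
    rintro ⟨n, -, rfl⟩
    exact hne n hxc
  exact ⟨x, hcluster.tendsto_subseq⟩

theorem exists_seq_tendsto_of_mem_frontier_preimage {X Z : Type*} [PseudoMetricSpace X]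
    [TopologicalSpace Z] [T1Space Z] [FirstCountableTopology Z] {f : X → Z} (hf : Continuous f)
    {c : Z} {u : ℕ → X} (hu : ∀ n, u n ∈ frontier (f ⁻¹' {c})) :
    ∃ v : ℕ → X, (∀ n, f (v n) ≠ c) ∧ Tendsto (f ∘ v) atTop (𝓝 c) ∧
      Tendsto (fun n => dist (u n) (v n)) atTop (𝓝 0) := by
  obtain ⟨U, hU⟩ := (𝓝 c).exists_antitone_basis
  have hv (n : ℕ) : ∃ v, f v ≠ c ∧ f v ∈ U n ∧ dist (u n) v < 1 / ((n : ℝ) + 1) := by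
    have hfu : f (u n) = c :=
      (isClosed_singleton.preimage hf).frontier_subset (hu n)
    have hcl : u n ∈ closure (f ⁻¹' {c})ᶜ := by
      rw [closure_compl]
      exact (hu n).2
    have hnhds : f ⁻¹' U n ∩ Metric.ball (u n) (1 / ((n : ℝ) + 1)) ∈ 𝓝 (u n) :=
      inter_mem (hf.continuousAt.preimage_mem_nhds (hfu ▸ hU.mem n))
        (Metric.ball_mem_nhds _ Nat.one_div_pos_of_nat)
    obtain ⟨v, ⟨hvU, hvb⟩, hvc⟩ := mem_closure_iff_nhds.1 hcl _ hnhds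
    exact ⟨v, hvc, hvU, Metric.mem_ball'.1 hvb⟩
  choose v hvc hvU hdist using hv
  exact ⟨v, hvc, hU.tendsto hvU, squeeze_zero (fun _ => dist_nonneg) (fun n => (hdist n).le)
    tendsto_one_div_add_atTop_nhds_zero_nat⟩

theorem isCompact_frontier_preimage_singleton {X Z : Type*} [MetricSpace X] [TopologicalSpace Z]
    [T1Space Z] [FirstCountableTopology Z] {f : X → Z} (hf : Continuous f)
    (hcl : IsClosedMap f) (c : Z) : IsCompact (frontier (f ⁻¹' {c})) := by
  rw [isCompact_iff_isSeqCompact]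
  intro u hu
  obtain ⟨v, hvc, hfv, hdist⟩ := exists_seq_tendsto_of_mem_frontier_preimage hf hu
  obtain ⟨x, σ, hσ, hx⟩ := exists_subseq_tendsto_of_isClosedMap hcl hvc hfv
  have hux : Tendsto (u ∘ σ) atTop (𝓝 x) :=
    (tendsto_iff_of_dist (hdist.comp hσ.tendsto_atTop)).2 hx
  exact ⟨x, isClosed_frontier.mem_of_tendsto hux (Eventually.of_forall fun n => hu (σ n)),
    σ, hσ, hux⟩

theorem isProperMap_of_isClosedMap {E Z : Type*} [NormedAddCommGroup E] [NormedSpace ℝ E]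
    [CompleteSpace E] (hE : ¬ FiniteDimensional ℝ E) [TopologicalSpace Z] [T1Space Z]
    [FirstCountableTopology Z] {f : E → Z} (hf : Continuous f) (hcl : IsClosedMap f)
    (hconst : ∀ c, ∃ x, f x ≠ c) : IsProperMap f := by
  refine isProperMap_iff_isClosedMap_and_compact_fibers.2 ⟨hf, hcl, fun c => ?_⟩
  have hfib : IsClosed (f ⁻¹' {c}) := isClosed_singleton.preimage hf
  have hfr := isCompact_frontier_preimage_singleton hf hcl c
  have hint : interior (f ⁻¹' {c}) = ∅ := by
    refine interior_eq_empty_of_isSigmaCompact_frontier hE hfr.isSigmaCompact fun hdense => ?_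
    obtain ⟨x, hx⟩ := hconst c
    exact hx (hfib.closure_subset (hdense x))
  rwa [hfib.frontier_eq, hint, sdiff_empty] at hfr

end ClosedMap

section Covering

theorem injective_of_isCoveringMap {Z Y : Type*} [TopologicalSpace Z] [TopologicalSpace Y]
    [PreconnectedSpace Z] [SimplyConnectedSpace Y] [LocallyPathConnectedSpace Y] {p : Z → Y}
    (hp : IsCoveringMap p) : Function.Injective p := by
  intro a b hab
  obtain ⟨σ, ⟨hσa, hpσ⟩, -⟩ :=
    hp.existsUnique_continuousMap_lifts (ContinuousMap.id Y) (p a) a rfl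
  have hσp : σ ∘ p = id := by
    refine hp.eq_of_comp_eq (σ.continuous.comp hp.continuous) continuous_id ?_ a hσa
    rw [← Function.comp_assoc, hpσ]
    rfl
  exact (show Function.LeftInverse σ p from congrFun hσp).injective hab

theorem isCoveringMapOn_of_isProperMap {Z Y : Type*} [TopologicalSpace Z] [T2Space Z]
    [TopologicalSpace Y] {f : Z → Y} {s : Set Y} (hf : IsProperMap f)
    (hloc : IsLocalHomeomorphOn f (f ⁻¹' s)) : IsCoveringMapOn f s := by
  refine hf.isClosedMap.isCoveringMapOn_of_isLocalHomeomorphOn (fun c hc => ?_) hloc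
  refine (hf.isCompact_preimage isCompact_singleton).finite ?_
  refine IsDiscrete.of_openPartialHomeomorph f subset_rfl fun x hx => ?_
  obtain ⟨e, hxe, hfe⟩ := hloc x (mem_preimage.2 ((mem_singleton_iff.1 hx).symm ▸ hc))
  exact ⟨e, hxe, hfe.symm⟩

theorem injOn_preimage_compl_of_isSigmaCompact {E F : Type*}
    [AddCommGroup E] [Module ℝ E] [TopologicalSpace E] [IsTopologicalAddGroup E]
    [ContinuousSMul ℝ E] [T2Space E] [BaireSpace E]
    [AddCommGroup F] [Module ℝ F] [TopologicalSpace F] [IsTopologicalAddGroup F]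
    [ContinuousSMul ℝ F] [LocallyPathConnectedSpace F] (hE : ¬ FiniteDimensional ℝ E)
    {f : E → F} (hf : IsProperMap f) {A : Set F} (hA : IsClosed A) (hσ : IsSigmaCompact A)
    (hloc : IsLocalHomeomorphOn f (f ⁻¹' Aᶜ)) : InjOn f (f ⁻¹' Aᶜ) := by
  intro a ha b _ hab
  let V : Set F := (shadow (f a) A)ᶜ
  have haV : f a ∈ V := notMem_shadow_self ha
  have hVA : V ⊆ Aᶜ := compl_subset_compl.2 (subset_shadow (f a) A)
  have hV_open : IsOpen V := (isClosed_shadow (f a) hA).isOpen_compl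
  have : ContractibleSpace V :=
    (starConvex_compl_shadow (f a) A).contractibleSpace ⟨f a, haV⟩
  have : LocallyPathConnectedSpace V := hV_open.locallyPathConnectedSpace
  have : PreconnectedSpace (f ⁻¹' V) := by
    have hpre := isSigmaCompact_preimage_of_isProperMap hf (isSigmaCompact_shadow hA hσ ha)
    exact isPreconnected_iff_preconnectedSpace.1
      (isPathConnected_compl_of_isSigmaCompact hE hpre).isConnected.isPreconnected
  have hcov : IsCoveringMapOn f V :=
    isCoveringMapOn_of_isProperMap hf (hloc.mono (preimage_mono hVA))
  have hinj := injective_of_isCoveringMap hcov.isCoveringMap_restrictPreimage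
  exact congrArg Subtype.val
    (hinj (a₁ := ⟨a, haV⟩) (a₂ := ⟨b, mem_preimage.2 (hab ▸ haV)⟩) (Subtype.ext hab))

end Covering

section InverseFunction

theorem isOpen_setOf_fderiv_isInvertible {𝕜 E F : Type*} [NontriviallyNormedField 𝕜]
    [NormedAddCommGroup E] [NormedSpace 𝕜 E] [CompleteSpace E] [NormedAddCommGroup F]
    [NormedSpace 𝕜 F] {f : E → F} {U : Set E} (hU : IsOpen U) (hf : ContDiffOn 𝕜 1 f U) :
    IsOpen {x ∈ U | (fderiv 𝕜 f x).IsInvertible} :=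
  (hf.continuousOn_fderiv_of_isOpen hU le_rfl).isOpen_inter_preimage hU
    (ContinuousLinearEquiv.isOpen (𝕜 := 𝕜) (E := E) (F := F))

theorem isLocalHomeomorphOn_setOf_fderiv_isInvertible {𝕜 E F : Type*} [RCLike 𝕜]
    [NormedAddCommGroup E] [NormedSpace 𝕜 E] [CompleteSpace E] [NormedAddCommGroup F]
    [NormedSpace 𝕜 F] {f : E → F} {U : Set E} (hU : IsOpen U) (hf : ContDiffOn 𝕜 1 f U) :
    IsLocalHomeomorphOn f {x ∈ U | (fderiv 𝕜 f x).IsInvertible} := by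
  rintro x ⟨hxU, e, he⟩
  have hstrict : HasStrictFDerivAt f (e : E →L[𝕜] F) x :=
    he ▸ (hf.contDiffAt (hU.mem_nhds hxU)).hasStrictFDerivAt one_ne_zero
  exact ⟨hstrict.toOpenPartialHomeomorph f, hstrict.mem_toOpenPartialHomeomorph_source,
    hstrict.toOpenPartialHomeomorph_coe.symm⟩

end InverseFunction

section PotentialOperator

variable {E : Type*} [NormedAddCommGroup E] [NormedSpace ℝ E] {J : E → ℝ}
  {T : E → StrongDual ℝ E}

theorem hasFDerivAt_eq_of_forall_sub_le {φ L : StrongDual ℝ E} {x : E} (hJ : HasFDerivAt J L x)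
    (hmin : ∀ z, J x - φ x ≤ J z - φ z) : L = φ :=
  sub_eq_zero.1 <|
    IsLocalMin.hasFDerivAt_eq_zero (Eventually.of_forall hmin) (hJ.sub φ.hasFDerivAt)

theorem exists_forall_sub_le (hrefl : Function.Surjective (inclusionInDoubleDual ℝ E))
    (hJ : WeaklySeqLowerSemicontinuous J) {φ : StrongDual ℝ E}
    (hcoer : Tendsto (fun x => J x + (-φ) x) (Bornology.cobounded E) atTop) :
    ∃ x, ∀ z, J x - φ x ≤ J z - φ z := by
  simpa [← sub_eq_add_neg] using (hJ.add_strongDual (-φ)).exists_forall_le hrefl hcoer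

theorem monotone_of_forall_sub_le (hmin : ∀ x z, J x - T x x ≤ J z - T x z) (x y : E) :
    0 ≤ (T x - T y) (x - y) := by
  simp only [sub_apply, map_sub]
  linarith [hmin x y, hmin y x]

theorem forall_sub_le_of_dense (hJ : Continuous J) (hT : Continuous T) {D : Set E}
    (hD : Dense D) (hmin : ∀ x ∈ D, ∀ z, J x - T x x ≤ J z - T x z) (x z : E) :
    J x - T x x ≤ J z - T x z := by
  have hclosed : IsClosed {x | J x - T x x ≤ J z - T x z} :=
    isClosed_le (by fun_prop) (by fun_prop)
  exact hclosed.closure_subset_iff.2 (fun y hy => hmin y hy z) (hD x)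

theorem monotone_of_isSigmaCompact_image_compl [CompleteSpace E]
    (hE : ¬ FiniteDimensional ℝ E) (hrefl : Function.Surjective (inclusionInDoubleDual ℝ E))
    (hT : Continuous T) (hcl : IsClosedMap T) (hpot : ∀ x, HasFDerivAt J (T x) x)
    (hJ : WeaklySeqLowerSemicontinuous J)
    (hcoer : ∀ φ : StrongDual ℝ E, Tendsto (fun x => J x + φ x) (Bornology.cobounded E) atTop)
    {R : Set E} (hR : IsOpen R) (hloc : IsLocalHomeomorphOn T R)
    (hσ : IsSigmaCompact (T '' Rᶜ)) (x y : E) : 0 ≤ (T x - T y) (x - y) := by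
  by_cases hconst : ∃ c, ∀ x, T x = c
  · obtain ⟨c, hc⟩ := hconst
    simp [hc]
  push Not at hconst
  have hproper : IsProperMap T := isProperMap_of_isClosedMap hE hT hcl hconst
  have hregular : T ⁻¹' (T '' Rᶜ)ᶜ ⊆ R :=
    compl_subset_comm.1 (subset_preimage_image T Rᶜ)
  have hinj : InjOn T (T ⁻¹' (T '' Rᶜ)ᶜ) := injOn_preimage_compl_of_isSigmaCompact hE hproper
    (hcl _ hR.isClosed_compl) hσ (hloc.mono hregular)
  have hdense : Dense (T ⁻¹' (T '' Rᶜ)ᶜ) :=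
    dense_compl_of_isSigmaCompact hE (isSigmaCompact_preimage_of_isProperMap hproper hσ)
  refine monotone_of_forall_sub_le (forall_sub_le_of_dense
    (continuous_iff_continuousAt.2 fun x => (hpot x).continuousAt) hT hdense fun x hx => ?_) x y
  obtain ⟨m, hm⟩ := exists_forall_sub_le hrefl hJ (hcoer (-T x))
  have hTm : T m = T x := hasFDerivAt_eq_of_forall_sub_le (hpot m) hm
  have hmx : m = x := hinj (mem_preimage.2 (hTm ▸ hx)) hx hTm
  exact hmx ▸ hm

end PotentialOperator

/-- Theorem 2 (first part): under the assumptions of Theorem 1, if moreover there is a closed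
σ-compact set `B ⊂ X` such that the restriction of `T` to `X \ B` is of class `C¹`, then the
image under `T` of the set of points `x ∈ X \ B` at which the Fréchet derivative
`T'(x) ∈ L(X, X*)` is not invertible is not σ-compact. -/
theorem image_of_tilde_singular_set_not_sigmaCompact
    {X : Type*} [NormedAddCommGroup X] [NormedSpace ℝ X] [CompleteSpace X]
    (hdim : ¬ FiniteDimensional ℝ X)
    (hrefl : Function.Surjective (inclusionInDoubleDual ℝ X))
    (T : X → StrongDual ℝ X)
    (hTcont : Continuous T)
    (JT : X → ℝ)
    (hJT : JT = fun x => ∫ s in (0:ℝ)..1, T (s • x) x)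
    (hpot : ∀ x : X, HasFDerivAt JT (T x) x)
    (hclosed : ∀ C : Set X, IsClosed C → IsClosed (T '' C))
    (hnmono : ¬ ∀ x y : X, 0 ≤ (T x - T y) (x - y))
    (hswlsc : ∀ (u : ℕ → X) (x : X),
      (∀ φ : StrongDual ℝ X, Tendsto (fun n => φ (u n)) atTop (𝓝 (φ x))) →
      ∀ b < JT x, ∀ᶠ n in atTop, b < JT (u n))
    (hcoer : ∀ φ : StrongDual ℝ X,
      Tendsto (fun x => JT x + φ x) (comap (fun x : X => ‖x‖) atTop) atTop)
    (B : Set X) (hBclosed : IsClosed B) (hBσ : IsSigmaCompact B)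
    (hTC1 : ContDiffOn ℝ 1 T Bᶜ) :
    ¬ IsSigmaCompact (T '' {x : X | x ∉ B ∧
      ¬ ∃ e : X ≃L[ℝ] StrongDual ℝ X, (e : X →L[ℝ] StrongDual ℝ X) = fderiv ℝ T x}) := by
  intro hσ
  let R : Set X := {x ∈ Bᶜ | (fderiv ℝ T x).IsInvertible}
  have hcompl : Rᶜ = B ∪ {x | x ∉ B ∧ ¬ (fderiv ℝ T x).IsInvertible} := by
    ext x
    by_cases hx : x ∈ B <;> simp [R, hx]
  have hRσ : IsSigmaCompact (T '' Rᶜ) := by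
    rw [hcompl, image_union]
    exact isSigmaCompact_union (hBσ.image hTcont) hσ
  rw [comap_norm_atTop] at hcoer
  exact hnmono (monotone_of_isSigmaCompact_image_compl hdim hrefl hTcont hclosed hpot hswlsc hcoer
    (isOpen_setOf_fderiv_isInvertible hBclosed.isOpen_compl hTC1)
    (isLocalHomeomorphOn_setOf_fderiv_isInvertible hBclosed.isOpen_compl hTC1) hRσ)
end

section
/- Let X be a reflexive real Banach space, let I : X → ℝ be a functional, and let A, B be two non-empty subsets of X such that sup_A I < inf_B I. Let Y be a convex subset of E_{I,A} (with respect to the pointwise vector space structure on functionals X → ℝ) such that inf_{x∈B} sup_{φ∈Y} φ(x) ≥ 0 and sup_{φ∈Y} φ(x) = +∞ for every x ∈ X \ B. Then there exists φ̃ ∈ Y such that the functional I + φ̃ has at least two global minima. -/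
open Filter Topology Set NormedSpace

/-!
For a convex family `Z` of functions with compact sublevel sets, uniqueness of the global minimizer
of every member forces the minimax equality `sup_{g ∈ Z} inf g = inf_x sup_{g ∈ Z} g x`. Indeed, on
the convex hull of finitely many members, which is compact for pointwise convergence, choose `f`
with the largest minimum, attained at `x₀`. Moving from `f` towards another member `g` cannot raise
the minimum, so `{g ≤ f x₀}` contains near-minimizers of `f` and, being compact, a minimizer. This
can only be `x₀`, whence `g x₀ ≤ f x₀`. For `Z = I + Y` the equality fails, because
`sup inf ≤ sup_A I < inf_B I ≤ inf sup`.

The compactness needed is that of sublevel sets in the weak topology. These sets are bounded and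
only known to be sequentially closed, which suffices by the Eberlein–Šmulian theorem: a point of the
weak closure of `S` already lies in the weak closure of a countable `C ⊆ S` (Kaplansky), and the
weakly compact set `closure C` is metrizable because countably many functionals separate its points.
-/

section Minimax

/-- The set of points at which `f` attains its global minimum. -/
def globalMinimizers {T : Type*} (f : T → ℝ) : Set T :=
  {x | ∀ y, f x ≤ f y}

theorem exists_max_globalMin {T : Type*} {K : Set (T → ℝ)} (hK : IsCompact K) (hne : K.Nonempty)
    (hmin : ∀ f ∈ K, (globalMinimizers f).Nonempty) :
    ∃ f ∈ K, ∃ x₀ ∈ globalMinimizers f, ∀ g ∈ K, ∃ x, g x ≤ f x₀ := by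
  have : Nonempty T := hne.elim fun f hf ↦ (hmin f hf).to_type
  choose! ξ hξ using hmin
  have husc : UpperSemicontinuousOn (fun f ↦ f (ξ f)) K := by
    intro f _ r hr
    have hlt : ∀ᶠ g in 𝓝[K] f, g (ξ f) < r :=
      (continuous_apply (ξ f)).continuousWithinAt.eventually_lt_const hr
    filter_upwards [hlt, self_mem_nhdsWithin] with g hg hgK
    exact (hξ g hgK (ξ f)).trans_lt hg
  obtain ⟨f, hf, hmax⟩ := husc.exists_isMaxOn hne hK
  exact ⟨f, hf, ξ f, hξ f hf, fun g hg ↦ ⟨ξ g, hmax hg⟩⟩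

variable {T : Type*} [TopologicalSpace T]

theorem globalMinimizers_nonempty_of_isCompact_sublevel {f : T → ℝ} {c : ℝ}
    (hf : LowerSemicontinuous f) (hcpt : IsCompact {x | f x ≤ c}) (hne : ∃ x, f x ≤ c) :
    (globalMinimizers f).Nonempty := by
  obtain ⟨x₀, hx₀, hmin⟩ := (hf.lowerSemicontinuousOn _).exists_isMinOn hne hcpt
  refine ⟨x₀, fun x ↦ ?_⟩
  rcases le_total (f x) c with hx | hx
  · exact hmin hx
  · exact le_trans hx₀ hx

theorem isCompact_sublevel_mono {f : T → ℝ} {b c : ℝ} (hf : LowerSemicontinuous f)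
    (hcpt : IsCompact {x | f x ≤ c}) (hbc : b ≤ c) : IsCompact {x | f x ≤ b} :=
  hcpt.of_isClosed_subset (hf.isClosed_preimage b) fun _ hx ↦ le_trans hx hbc

theorem le_of_segment_le {f g : T → ℝ} {x₀ : T}
    (hf : LowerSemicontinuous f) (hg : LowerSemicontinuous g)
    (hcpt : IsCompact {x | g x ≤ f x₀}) (hx₀ : x₀ ∈ globalMinimizers f)
    (huniq : (globalMinimizers f).Subsingleton)
    (hseg : ∀ s ∈ Ioo (0 : ℝ) 1, ∃ x, (1 - s) * f x + s * g x ≤ f x₀) :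
    g x₀ ≤ f x₀ := by
  have hseg' : ∀ s ∈ Ioo (0 : ℝ) 1, ∃ x, g x ≤ f x₀ ∧ (1 - s) * f x + s * g x ≤ f x₀ := by
    intro s hs
    obtain ⟨x, hx⟩ := hseg s hs
    refine ⟨x, le_of_mul_le_mul_left ?_ hs.1, hx⟩
    nlinarith [hx₀ x, hs.2]
  have hne : {x | g x ≤ f x₀}.Nonempty :=
    (hseg' (1 / 2) (by norm_num)).imp fun _ ↦ And.left
  obtain ⟨z, hzg, hz⟩ := (hf.lowerSemicontinuousOn _).exists_isMinOn hne hcpt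
  obtain ⟨y, -, hy⟩ := (hg.lowerSemicontinuousOn _).exists_isMinOn hne hcpt
  have hz_le : ∀ s ∈ Ioo (0 : ℝ) 1, (1 - s) * f z + s * g y ≤ f x₀ := by
    intro s hs
    obtain ⟨x, hxg, hx⟩ := hseg' s hs
    have hs₁ : 0 ≤ 1 - s := sub_nonneg.2 hs.2.le
    exact (add_le_add (mul_le_mul_of_nonneg_left (hz hxg) hs₁)
      (mul_le_mul_of_nonneg_left (hy hxg) hs.1.le)).trans hx
  have hlim : Tendsto (fun s : ℝ ↦ (1 - s) * f z + s * g y) (𝓝[>] 0) (𝓝 (f z)) := by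
    refine tendsto_nhdsWithin_of_tendsto_nhds ?_
    exact Continuous.tendsto' (by fun_prop) _ _ (by ring)
  have hfz : f z ≤ f x₀ :=
    le_of_tendsto hlim (eventually_of_mem (Ioo_mem_nhdsGT one_pos) hz_le)
  obtain rfl : z = x₀ := huniq (fun w ↦ hfz.trans (hx₀ w)) hx₀
  exact hzg

theorem exists_saddlePoint_of_isCompact_convex {K : Set (T → ℝ)} {c : ℝ} (hK : IsCompact K)
    (hconv : Convex ℝ K) (hne : K.Nonempty) (hlsc : ∀ g ∈ K, LowerSemicontinuous g)
    (hcpt : ∀ g ∈ K, IsCompact {x | g x ≤ c}) (hle : ∀ g ∈ K, ∃ x, g x ≤ c)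
    (huniq : ∀ g ∈ K, (globalMinimizers g).Subsingleton) :
    ∃ f ∈ K, ∃ x₀ ∈ globalMinimizers f, ∀ g ∈ K, g x₀ ≤ f x₀ := by
  obtain ⟨f, hf, x₀, hx₀, hmax⟩ := exists_max_globalMin hK hne fun g hg ↦
    globalMinimizers_nonempty_of_isCompact_sublevel (hlsc g hg) (hcpt g hg) (hle g hg)
  refine ⟨f, hf, x₀, hx₀, fun g hg ↦ ?_⟩
  have hfc : f x₀ ≤ c := (hle f hf).elim fun x ↦ (hx₀ x).trans
  refine le_of_segment_le (hlsc f hf) (hlsc g hg)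
    (isCompact_sublevel_mono (hlsc g hg) (hcpt g hg) hfc) hx₀ (huniq f hf) fun s hs ↦ ?_
  exact hmax ((1 - s) • f + s • g)
    (hconv hf hg (sub_nonneg.2 hs.2.le) hs.1.le (sub_add_cancel 1 s))

theorem exists_nontrivial_globalMinimizers_of_minimax_gap [Nonempty T] {Z : Set (T → ℝ)} {c : ℝ}
    (hconv : Convex ℝ Z) (hlsc : ∀ g ∈ Z, LowerSemicontinuous g)
    (hcpt : ∀ g ∈ Z, IsCompact {x | g x ≤ c}) (hle : ∀ g ∈ Z, ∃ x, g x ≤ c)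
    (hlt : ∀ x, ∃ g ∈ Z, c < g x) :
    ∃ g ∈ Z, (globalMinimizers g).Nontrivial := by
  by_contra! huniq
  obtain ⟨g₀, hg₀, -⟩ := hlt (Classical.arbitrary T)
  have hempty : {x | g₀ x ≤ c} ∩ ⋂ g ∈ Z, g ⁻¹' Iic c = ∅ := by
    refine eq_empty_of_forall_notMem fun x ⟨_, hx⟩ ↦ ?_
    obtain ⟨g, hg, hgx⟩ := hlt x
    exact hgx.not_ge (mem_iInter₂.1 hx g hg)
  obtain ⟨F, hF⟩ := (LowerSemicontinuousOn.inter_biInter_preimage_Iic_eq_empty_iff_exists_finset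
    (f := id) (hcpt g₀ hg₀) fun g hg ↦ (hlsc g hg).lowerSemicontinuousOn _).1 hempty
  have hfin : (insert g₀ ((↑) '' (F : Set Z))).Finite := (F.finite_toSet.image _).insert g₀
  let K := convexHull ℝ (insert g₀ ((↑) '' (F : Set Z)))
  have hsub : insert g₀ ((↑) '' (F : Set Z)) ⊆ K := subset_convexHull ℝ _
  have hKZ : K ⊆ Z :=
    convexHull_min (insert_subset hg₀ (image_subset_iff.2 fun g _ ↦ g.2)) hconv
  obtain ⟨f, hf, x₀, hx₀, hmax⟩ := exists_saddlePoint_of_isCompact_convex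
    (hfin.isCompact_convexHull ℝ) (convex_convexHull ℝ _) ⟨g₀, hsub (mem_insert _ _)⟩
    (fun g hg ↦ hlsc g (hKZ hg)) (fun g hg ↦ hcpt g (hKZ hg)) (fun g hg ↦ hle g (hKZ hg))
    (fun g hg ↦ huniq g (hKZ hg))
  obtain ⟨y, hy⟩ := hle f (hKZ hf)
  have hx₀c : ∀ g ∈ K, g x₀ ≤ c := fun g hg ↦ (hmax g hg).trans ((hx₀ y).trans hy)
  obtain ⟨g, hg, hgx⟩ := hF x₀ (hx₀c g₀ (hsub (mem_insert _ _)))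
  exact hgx.not_ge (hx₀c g (hsub (mem_insert_of_mem _ (mem_image_of_mem _ hg))))

end Minimax

section SeqSemicontinuity

/-- Sequential lower semicontinuity: `f x ≤ liminf f (u n)` whenever `u n → x`, phrased without
the `liminf` in the style of `LowerSemicontinuous`. -/
def SeqLowerSemicontinuous {T : Type*} [TopologicalSpace T] (f : T → ℝ) : Prop :=
  ∀ ⦃u : ℕ → T⦄ ⦃x : T⦄, Tendsto u atTop (𝓝 x) → ∀ b < f x, ∀ᶠ n in atTop, b < f (u n)

theorem SeqLowerSemicontinuous.isSeqClosed_sublevel {T : Type*} [TopologicalSpace T] {f : T → ℝ}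
    (hf : SeqLowerSemicontinuous f) (r : ℝ) : IsSeqClosed {x | f x ≤ r} := by
  intro u x hu hux
  by_contra hx
  obtain ⟨n, hn⟩ := (hf hux r (not_le.1 hx)).exists
  exact hn.not_ge (hu n)

end SeqSemicontinuity

section WeakTopology

open TopologicalSpace

variable {𝕜 X : Type*} [RCLike 𝕜] [NormedAddCommGroup X] [NormedSpace 𝕜 X]

theorem continuous_weakSpace_eval (f : StrongDual 𝕜 X) :
    Continuous fun x : WeakSpace 𝕜 X ↦ f ((toWeakSpace 𝕜 X).symm x) :=
  WeakBilin.eval_continuous (topDualPairing 𝕜 X).flip f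

theorem mem_closure_weakSpace_iff {S : Set (WeakSpace 𝕜 X)} {x : WeakSpace 𝕜 X} :
    x ∈ closure S ↔ ∀ (F : Finset (StrongDual 𝕜 X)) (ε : ℝ), 0 < ε →
      ∃ a ∈ S, ∀ f ∈ F, ‖f ((toWeakSpace 𝕜 X).symm (a - x))‖ < ε := by
  have hbasis := (topDualPairing 𝕜 X).flip.weakBilin_withSeminorms.hasBasis_ball (x := x)
  refine (mem_closure_iff_nhds_basis hbasis).trans (Prod.forall.trans ?_)
  refine forall₃_congr fun F ε hε ↦ exists_congr fun a ↦ and_congr_right fun _ ↦ ?_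
  exact (Set.ext_iff.1 (Seminorm.ball_finset_sup_eq_iInter _ F _ hε) a).trans mem_iInter₂

theorem exists_finite_approx_of_mem_closure_weakSpace {S : Set (WeakSpace 𝕜 X)}
    {x : WeakSpace 𝕜 X} (hx : x ∈ closure S) (ι : Type*) [Finite ι] (r : ℝ) {ε : ℝ} (hε : 0 < ε) :
    ∃ F ⊆ S, F.Finite ∧ ∀ f : ι → StrongDual 𝕜 X, (∀ i, ‖f i‖ ≤ r) →
      ∃ a ∈ F, ∀ i, ‖f i ((toWeakSpace 𝕜 X).symm (a - x))‖ < ε := by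
  let K : Set (ι → WeakDual 𝕜 X) :=
    univ.pi fun _ ↦ WeakDual.toStrongDual ⁻¹' Metric.closedBall 0 r
  have hK : IsCompact K := isCompact_univ_pi fun _ ↦ WeakDual.isCompact_closedBall 0 r
  let U (a : WeakSpace 𝕜 X) : Set (ι → WeakDual 𝕜 X) :=
    {f | ∀ i, ‖f i ((toWeakSpace 𝕜 X).symm (a - x))‖ < ε}
  have hU : ∀ a ∈ S, IsOpen (U a) := fun a _ ↦ by
    simp only [U, ofPred_forall]
    exact isOpen_iInter_of_finite fun i ↦ isOpen_lt
      ((WeakDual.eval_continuous _).comp (continuous_apply i)).norm continuous_const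
  have hcover : K ⊆ ⋃ a ∈ S, U a := fun f _ ↦ by
    obtain ⟨a, ha, hfa⟩ := mem_closure_weakSpace_iff.1 hx
      (finite_range fun i ↦ WeakDual.toStrongDual (f i)).toFinset ε hε
    exact mem_biUnion ha fun i ↦ hfa _ ((Finite.mem_toFinset _).2 (mem_range_self i))
  obtain ⟨F, hFS, hF, hcoverF⟩ := hK.elim_finite_subcover_image hU hcover
  refine ⟨F, hFS, hF, fun f hf ↦ ?_⟩
  have hfK : (fun i ↦ StrongDual.toWeakDual (f i)) ∈ K := fun i _ ↦ mem_closedBall_zero_iff.2 (hf i)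
  obtain ⟨a, ha, hfa⟩ := mem_iUnion₂.1 (hcoverF hfK)
  exact ⟨a, ha, hfa⟩

theorem exists_countable_subset_mem_closure_weakSpace {S : Set (WeakSpace 𝕜 X)}
    {x : WeakSpace 𝕜 X} (hx : x ∈ closure S) : ∃ C ⊆ S, C.Countable ∧ x ∈ closure C := by
  choose F hFS hF hFx using fun p : ℕ × ℕ × ℕ ↦
    exists_finite_approx_of_mem_closure_weakSpace hx (Fin p.1) p.2.1
      (Nat.one_div_pos_of_nat (α := ℝ) (n := p.2.2))
  refine ⟨⋃ p, F p, iUnion_subset hFS, countable_iUnion fun p ↦ (hF p).countable, ?_⟩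
  refine mem_closure_weakSpace_iff.2 fun G ε hε ↦ ?_
  obtain ⟨r, hr⟩ : ∃ r : ℕ, ∀ g ∈ G, ‖g‖ ≤ r := by
    obtain ⟨M, hM⟩ := (G.finite_toSet.image norm).bddAbove
    exact (exists_nat_ge M).imp fun r hr g hg ↦ (hM (mem_image_of_mem _ hg)).trans hr
  obtain ⟨k, hk⟩ := exists_nat_one_div_lt hε
  obtain ⟨a, ha, hga⟩ := hFx (G.card, r, k) (fun i ↦ G.equivFin.symm i)
    fun i ↦ hr _ (G.equivFin.symm i).2
  refine ⟨a, mem_iUnion_of_mem _ ha, fun g hg ↦ ?_⟩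
  simpa using (hga (G.equivFin ⟨g, hg⟩)).trans hk

theorem exists_seq_dual_separating (V : Submodule 𝕜 X) [SeparableSpace V] :
    ∃ f : ℕ → StrongDual 𝕜 X, ∀ x ∈ V, (∀ n, f n x = 0) → x = 0 := by
  choose f hf_norm hf_apply using fun n ↦ exists_dual_vector'' 𝕜 (denseSeq V n : X)
  refine ⟨f, fun x hxV hfx ↦ norm_le_zero_iff.1 (le_of_forall_pos_le_add fun ε hε ↦ ?_)⟩
  obtain ⟨n, hn⟩ := Metric.denseRange_iff.1 (denseRange_denseSeq V) ⟨x, hxV⟩ (ε / 2) (half_pos hε)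
  set v : X := ↑(denseSeq V n)
  have hv : ‖x - v‖ < ε / 2 := by simpa [Subtype.dist_eq, dist_eq_norm] using hn
  have hv_norm : ‖v‖ ≤ ‖x - v‖ := calc
    ‖v‖ = ‖f n (x - v)‖ := by simp [hfx n, hf_apply n, v]
    _ ≤ ‖x - v‖ := (f n).le_of_opNorm_le (hf_norm n) _ |>.trans_eq (one_mul _)
  calc ‖x‖ ≤ ‖x - v‖ + ‖v‖ := norm_le_norm_sub_add x v
    _ ≤ 0 + ε := by linarith

theorem metrizableSpace_of_isCompact_weakSpace {K : Set (WeakSpace 𝕜 X)} (hK : IsCompact K)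
    (hsep : IsSeparable (toWeakSpace 𝕜 X ⁻¹' K)) : MetrizableSpace K := by
  have : CompactSpace K := isCompact_iff_compactSpace.1 hK
  have : SeparableSpace (Submodule.span 𝕜 (toWeakSpace 𝕜 X ⁻¹' K)) := hsep.span.separableSpace
  obtain ⟨f, hf⟩ := exists_seq_dual_separating (Submodule.span 𝕜 (toWeakSpace 𝕜 X ⁻¹' K))
  refine Metric.PiNatEmbed.TopologicalSpace.MetrizableSpace.of_countable_separating
    (fun n (x : K) ↦ f n ((toWeakSpace 𝕜 X).symm x))
    (fun n ↦ (continuous_weakSpace_eval (f n)).comp continuous_subtype_val) fun x y hxy ↦ ?_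
  contrapose! hxy
  refine Subtype.ext ((toWeakSpace 𝕜 X).symm.injective (sub_eq_zero.1 (hf _ ?_ fun n ↦ ?_)))
  · exact Submodule.sub_mem _ (Submodule.subset_span (by simp)) (Submodule.subset_span (by simp))
  · rw [map_sub, hxy n, sub_self]

theorem isSeparable_closure_weakSpace {C : Set (WeakSpace 𝕜 X)}
    (hC : IsSeparable (toWeakSpace 𝕜 X ⁻¹' C)) :
    IsSeparable (toWeakSpace 𝕜 X ⁻¹' closure C) := by
  let _ := NormedSpace.restrictScalars ℝ 𝕜 X
  set V := Submodule.span 𝕜 (toWeakSpace 𝕜 X ⁻¹' C)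
  have hclosure : closure C ⊆ toWeakSpace 𝕜 X '' closure (V : Set X) := by
    have hV : Convex ℝ (V : Set X) := (V.restrictScalars ℝ).convex
    rw [hV.toWeakSpace_closure 𝕜]
    exact closure_mono fun x hx ↦ ⟨(toWeakSpace 𝕜 X).symm x, Submodule.subset_span hx, rfl⟩
  refine hC.span (R := 𝕜).closure.mono fun x hx ↦ ?_
  obtain ⟨y, hy, hyx⟩ := hclosure hx
  rwa [← (toWeakSpace 𝕜 X).injective hyx]

theorem seqClosure_eq_closure_weakSpace {S : Set (WeakSpace 𝕜 X)} (hS : IsCompact (closure S)) :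
    seqClosure S = closure S := by
  refine seqClosure_subset_closure.antisymm fun x hx ↦ ?_
  obtain ⟨C, hCS, hC, hxC⟩ := exists_countable_subset_mem_closure_weakSpace hx
  have hcpt : IsCompact (closure C) := hS.of_isClosed_subset isClosed_closure (closure_mono hCS)
  have hsep : IsSeparable (toWeakSpace 𝕜 X ⁻¹' C) :=
    (hC.preimage (toWeakSpace 𝕜 X).injective).isSeparable
  have := metrizableSpace_of_isCompact_weakSpace hcpt (isSeparable_closure_weakSpace hsep)
  have hxC' : (⟨x, hxC⟩ : closure C) ∈ closure ((↑) ⁻¹' C) := by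
    rwa [closure_subtype, Subtype.image_preimage_coe, inter_eq_right.2 subset_closure]
  obtain ⟨u, huC, hux⟩ := mem_closure_iff_seq_limit.1 hxC'
  exact ⟨fun n ↦ u n, fun n ↦ hCS (huC n), (continuous_subtype_val.tendsto _).comp hux⟩

theorem isClosed_weakSpace_of_isSeqClosed {S : Set (WeakSpace 𝕜 X)}
    (hS : IsCompact (closure S)) (hseq : IsSeqClosed S) : IsClosed S := by
  rw [← closure_eq_iff_isClosed, ← seqClosure_eq_closure_weakSpace hS, hseq.seqClosure_eq]

theorem isCompact_closure_weakSpace_of_isBounded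
    (hrefl : Function.Surjective (inclusionInDoubleDual 𝕜 X)) {S : Set (WeakSpace 𝕜 X)}
    (hS : Bornology.IsBounded (toWeakSpace 𝕜 X ⁻¹' S)) : IsCompact (closure S) := by
  refine isCompact_closure_of_isBounded 𝕜 X S hS fun y _ ↦ ?_
  obtain ⟨x, hx⟩ := hrefl (WeakDual.toStrongDual y)
  exact ⟨toWeakSpace 𝕜 X x, DFunLike.ext _ _ fun f ↦ DFunLike.congr_fun hx f⟩

theorem isBounded_sublevel_of_tendsto_cobounded {E : Type*} [Bornology E] {f : E → ℝ}
    (hf : Tendsto f (Bornology.cobounded E) atTop) (r : ℝ) :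
    Bornology.IsBounded {x | f x ≤ r} := by
  rw [← Bornology.isCobounded_compl_iff, Bornology.isCobounded_def]
  filter_upwards [hf.eventually_gt_atTop r] with x hx using not_le.2 hx

theorem isCompact_closure_sublevel_of_coercive
    (hrefl : Function.Surjective (inclusionInDoubleDual 𝕜 X)) {f : WeakSpace 𝕜 X → ℝ}
    (hcoer : Tendsto (f ∘ toWeakSpace 𝕜 X) (Bornology.cobounded X) atTop) (r : ℝ) :
    IsCompact (closure {x | f x ≤ r}) :=
  isCompact_closure_weakSpace_of_isBounded hrefl
    (isBounded_sublevel_of_tendsto_cobounded hcoer r)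

theorem SeqLowerSemicontinuous.lowerSemicontinuous_of_coercive
    (hrefl : Function.Surjective (inclusionInDoubleDual 𝕜 X)) {f : WeakSpace 𝕜 X → ℝ}
    (hf : SeqLowerSemicontinuous f)
    (hcoer : Tendsto (f ∘ toWeakSpace 𝕜 X) (Bornology.cobounded X) atTop) :
    LowerSemicontinuous f :=
  lowerSemicontinuous_iff_isClosed_preimage.2 fun r ↦ isClosed_weakSpace_of_isSeqClosed
    (isCompact_closure_sublevel_of_coercive hrefl hcoer r) (hf.isSeqClosed_sublevel r)

theorem SeqLowerSemicontinuous.isCompact_sublevel_of_coercive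
    (hrefl : Function.Surjective (inclusionInDoubleDual 𝕜 X)) {f : WeakSpace 𝕜 X → ℝ}
    (hf : SeqLowerSemicontinuous f)
    (hcoer : Tendsto (f ∘ toWeakSpace 𝕜 X) (Bornology.cobounded X) atTop) (r : ℝ) :
    IsCompact {x | f x ≤ r} :=
  (isCompact_closure_sublevel_of_coercive hrefl hcoer r).of_isClosed_subset
    ((hf.lowerSemicontinuous_of_coercive hrefl hcoer).isClosed_preimage r) subset_closure

theorem exists_nontrivial_globalMinimizers_of_coercive
    (hrefl : Function.Surjective (inclusionInDoubleDual 𝕜 X)) {Z : Set (X → ℝ)} {c : ℝ}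
    (hconv : Convex ℝ Z) (hseq : ∀ g ∈ Z, SeqLowerSemicontinuous (g ∘ (toWeakSpace 𝕜 X).symm))
    (hcoer : ∀ g ∈ Z, Tendsto g (Bornology.cobounded X) atTop)
    (hle : ∀ g ∈ Z, ∃ x, g x ≤ c) (hlt : ∀ x, ∃ g ∈ Z, c < g x) :
    ∃ g ∈ Z, (globalMinimizers g).Nontrivial := by
  let e := (toWeakSpace 𝕜 X).symm
  have hlsc : ∀ g ∈ Z, LowerSemicontinuous (g ∘ e) := fun g hg ↦
    (hseq g hg).lowerSemicontinuous_of_coercive hrefl (hcoer g hg)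
  have hcpt : ∀ g ∈ Z, IsCompact {x | g (e x) ≤ c} := fun g hg ↦
    (hseq g hg).isCompact_sublevel_of_coercive hrefl (hcoer g hg) c
  obtain ⟨_, ⟨g, hg, rfl⟩, u, hu, v, hv, huv⟩ := exists_nontrivial_globalMinimizers_of_minimax_gap
    (hconv.linear_image (LinearMap.funLeft ℝ ℝ e)) (forall_mem_image.2 hlsc)
    (forall_mem_image.2 hcpt) (forall_mem_image.2 hle) fun x ↦ exists_mem_image.2 (hlt (e x))
  exact ⟨g, hg, e u, fun w ↦ hu (e.symm w), e v, fun w ↦ hv (e.symm w), e.injective.ne huv⟩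

end WeakTopology

/-- Theorem 4: let `I : X → ℝ`, and let `A, B` be nonempty subsets of `X` with
`sup_A I < inf_B I`. Let `Y` be a convex set of functionals `φ : X → ℝ` such that each
`φ ∈ Y` makes `I + φ` sequentially weakly lower semicontinuous and coercive with
`inf_A φ ≤ 0`, and such that `inf_{x ∈ B} sup_{φ ∈ Y} φ(x) ≥ 0` and
`sup_{φ ∈ Y} φ(x) = +∞` for all `x ∉ B`. Then some `φ̃ ∈ Y` is such that `I + φ̃` has at
least two global minima. -/
theorem exists_functional_with_two_global_minima
    {X : Type*} [NormedAddCommGroup X] [NormedSpace ℝ X] [CompleteSpace X]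
    (hrefl : Function.Surjective (inclusionInDoubleDual ℝ X))
    (I : X → ℝ) (A B : Set X) (hA : A.Nonempty) (hB : B.Nonempty)
    -- `sup_A I < inf_B I`
    (hsep : ∃ c₁ c₂ : ℝ, c₁ < c₂ ∧ (∀ x ∈ A, I x ≤ c₁) ∧ (∀ x ∈ B, c₂ ≤ I x))
    (Y : Set (X → ℝ)) (hYconv : Convex ℝ Y)
    -- `Y ⊆ E_{I,A}`
    (hYsub : ∀ φ ∈ Y,
      -- `I + φ` is sequentially weakly lower semicontinuous
      (∀ (u : ℕ → X) (x : X),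
        (∀ ψ : StrongDual ℝ X, Tendsto (fun n => ψ (u n)) atTop (𝓝 (ψ x))) →
        ∀ b < I x + φ x, ∀ᶠ n in atTop, b < I (u n) + φ (u n)) ∧
      -- `I + φ` is coercive
      Tendsto (fun x => I x + φ x) (comap (fun x : X => ‖x‖) atTop) atTop ∧
      -- `inf_A φ ≤ 0`
      (∀ ε > (0:ℝ), ∃ x ∈ A, φ x < ε))
    -- `inf_{x ∈ B} sup_{φ ∈ Y} φ(x) ≥ 0`
    (hYB : ∀ x ∈ B, ∀ ε > (0:ℝ), ∃ φ ∈ Y, -ε < φ x)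
    -- `sup_{φ ∈ Y} φ(x) = +∞` for `x ∉ B`
    (hYnB : ∀ x ∉ B, ∀ M : ℝ, ∃ φ ∈ Y, M < φ x) :
    ∃ φ ∈ Y, ∃ u v : X, u ≠ v ∧
      (∀ w : X, I u + φ u ≤ I w + φ w) ∧ (∀ w : X, I v + φ v ≤ I w + φ w) := by
  obtain ⟨c₁, c₂, hc, hIA, hIB⟩ := hsep
  have hε : 0 < (c₂ - c₁) / 2 := half_pos (sub_pos.2 hc)
  have hle : ∀ φ ∈ Y, ∃ x, I x + φ x ≤ (c₁ + c₂) / 2 := by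
    intro φ hφ
    obtain ⟨a, ha, hφa⟩ := (hYsub φ hφ).2.2 _ hε
    exact ⟨a, by linarith [hIA a ha]⟩
  have hlt : ∀ x, ∃ φ ∈ Y, (c₁ + c₂) / 2 < I x + φ x := by
    intro x
    by_cases hxB : x ∈ B
    · obtain ⟨φ, hφ, hφx⟩ := hYB x hxB _ hε
      exact ⟨φ, hφ, by linarith [hIB x hxB]⟩
    · obtain ⟨φ, hφ, hφx⟩ := hYnB x hxB ((c₁ + c₂) / 2 - I x)
      exact ⟨φ, hφ, sub_lt_iff_lt_add'.1 hφx⟩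
  obtain ⟨_, ⟨φ, hφ, rfl⟩, u, hu, v, hv, huv⟩ :=
    exists_nontrivial_globalMinimizers_of_coercive hrefl (hYconv.translate I)
      (forall_mem_image.2 fun φ hφ u x hux ↦ (hYsub φ hφ).1 _ _ fun ψ ↦
        ((continuous_weakSpace_eval ψ).tendsto x).comp hux)
      (forall_mem_image.2 fun φ hφ ↦ comap_norm_atTop (E := X) ▸ (hYsub φ hφ).2.1)
      (forall_mem_image.2 hle) fun x ↦ exists_mem_image.2 (hlt x)
  exact ⟨φ, hφ, u, v, huv, hu, hv⟩
end
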